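/- arXiv:1502.03724 — 2 statements merged into one kernel-verified Lean document; each statement's English description precedes it below -/
import Mathlib

section
/- Let N ≥ 1 and let R = (1/2)(P_M − P_E) be the Markov R-matrix on gl(N,ℝ). Then for all N×N real matrices A and B, the R-deformed bracket reduces to the bracket of the M-projections: ⁅R(A), B⁆ + ⁅A, R(B)⁆ = ⁅P_M(A), P_M(B)⁆. -/
/-!
Write each element as the sum of its `M`- and `E`-parts. In the `R`-bracket the mixed brackets of
an `M`-part with an `E`-part cancel, leaving `⁅PM A, PM B⁆ - ⁅PE A, PE B⁆`; the last term
vanishes because the `E`-parts, being diagonal matrices, commute.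
-/

section LieAlgebra

variable {L : Type*} [LieRing L]

theorem lie_sub_add_add_lie_add_sub {M : Type*} [AddCommGroup M] [LieRingModule L M]
    (x y : L) (m n : M) :
    ⁅x - y, m + n⁆ + ⁅x + y, m - n⁆ = 2 • (⁅x, m⁆ - ⁅y, n⁆) := by
  simp only [sub_lie, add_lie, lie_add, lie_sub]
  abel

theorem markov_R_bracket_reduction_general {K : Type*} [CommRing K] [Invertible (2 : K)]
    [LieAlgebra K L] (PE PM R : L → L)
    (hPE : ∀ A B, ⁅PE A, PE B⁆ = 0)
    (hPM : ∀ A, PM A = A - PE A)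
    (hR : ∀ A, R A = ⅟(2 : K) • (PM A - PE A)) (A B : L) :
    ⁅R A, B⁆ + ⁅A, R B⁆ = ⁅PM A, PM B⁆ := by
  have PM_add_PE (X : L) : PM X + PE X = X := by rw [hPM, sub_add_cancel]
  calc
    ⁅R A, B⁆ + ⁅A, R B⁆
      = ⅟(2 : K) • (⁅PM A - PE A, PM B + PE B⁆ + ⁅PM A + PE A, PM B - PE B⁆) := by
        rw [hR, hR, smul_lie, lie_smul, smul_add, PM_add_PE, PM_add_PE]
    _ = ⅟(2 : K) • (2 : K) • (⁅PM A, PM B⁆ - ⁅PE A, PE B⁆) := by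
        rw [lie_sub_add_add_lie_add_sub, ofNat_smul_eq_nsmul K 2]
    _ = ⁅PM A, PM B⁆ := by rw [invOf_smul_smul, hPE, sub_zero]

end LieAlgebra

/-- For the Markov R-matrix `R = (1/2)(P_M - P_E)` on `gl(N,ℝ)`,
the R-deformed bracket reduces to the bracket of the `M`-projections:
`⁅R(A), B⁆ + ⁅A, R(B)⁆ = ⁅P_M(A), P_M(B)⁆`. -/
theorem markov_R_bracket_reduction (N : ℕ) (hN : 1 ≤ N)
    (PE PM R : Matrix (Fin N) (Fin N) ℝ → Matrix (Fin N) (Fin N) ℝ)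
    (hPE : ∀ A, PE A = Matrix.diagonal (fun j => ∑ i, A i j))
    (hPM : ∀ A, PM A = A - PE A)
    (hR : ∀ A, R A = (1 / 2 : ℝ) • (PM A - PE A)) :
    ∀ A B : Matrix (Fin N) (Fin N) ℝ,
      ⁅R A, B⁆ + ⁅A, R B⁆ = ⁅PM A, PM B⁆ := by
  let _ : LieRing (Matrix (Fin N) (Fin N) ℝ) := LieRing.ofAssociativeRing
  have lie_PE (A B) : ⁅PE A, PE B⁆ = 0 := by
    rw [hPE, hPE, (Matrix.commute_diagonal _ _).lie_eq]
  exact markov_R_bracket_reduction_general (K := ℝ) PE PM R lie_PE hPM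
    (by simpa only [one_div, invOf_eq_inv] using hR)
end

section
/- Let N ≥ 1 and let R = (1/2)(P_M − P_E) be the Markov R-matrix on gl(N,ℝ). Then the deformed bracket [A,B]_R := ⁅R(A), B⁆ + ⁅A, R(B)⁆ defines a Lie bracket on the N×N real matrices: it is bilinear, antisymmetric, and satisfies the Jacobi identity [[A,B]_R, C]_R + [[B,C]_R, A]_R + [[C,A]_R, B]_R = 0 for all A, B, C. -/
/-!
If the deformed bracket of an operator `R` on a Lie algebra satisfies
`⁅R x, R y⁆ - R [x, y]_R = κ ⁅x, y⁆`, then the Jacobi identity for `[·, ·]_R` reduces to four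
instances of the Jacobi identity for `⁅·, ·⁆`. A multiple `c (p - q)` of the difference of
complementary projections onto two Lie subalgebras satisfies this equation with `κ = -c ^ 2`. The
Markov projections are of this kind: matrices with vanishing column sums form a right ideal, hence a
Lie subalgebra, and diagonal matrices commute.
-/

section RBracket

variable {K L : Type*} [CommRing K] [LieRing L] [LieAlgebra K L]

/-- The deformed bracket `[x, y]_R = ⁅R x, y⁆ + ⁅x, R y⁆` attached to a linear operator `R` on a Lie
algebra, bundled as a bilinear map. -/
def rBracket (R : L →ₗ[K] L) : L →ₗ[K] L →ₗ[K] L :=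
  (LieAlgebra.ad K L : L →ₗ[K] Module.End K L) ∘ₗ R +
    (LieAlgebra.ad K L : L →ₗ[K] Module.End K L).compl₂ R

theorem rBracket_apply (R : L →ₗ[K] L) (x y : L) : rBracket R x y = ⁅R x, y⁆ + ⁅x, R y⁆ :=
  rfl

theorem rBracket_skew (R : L →ₗ[K] L) (x y : L) : -rBracket R y x = rBracket R x y := by
  rw [rBracket_apply, rBracket_apply, neg_add, lie_skew, lie_skew, add_comm]

/-- The modified classical Yang–Baxter equation with parameter `κ` for a linear operator `R`; the
sign of `κ` is such that half the difference of complementary projections onto Lie subalgebras has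
`κ = -1 / 4`. -/
def IsModifiedYangBaxter (R : L →ₗ[K] L) (κ : K) : Prop :=
  ∀ x y, ⁅R x, R y⁆ - R (rBracket R x y) = κ • ⁅x, y⁆

theorem lie_lie_cyclic_sum_eq_zero (x y z : L) : ⁅⁅x, y⁆, z⁆ + ⁅⁅y, z⁆, x⁆ + ⁅⁅z, x⁆, y⁆ = 0 := by
  rw [← lie_skew ⁅x, y⁆, ← lie_skew ⁅y, z⁆, ← lie_skew ⁅z, x⁆, ← neg_add,
    ← neg_add, lie_jacobi z x y, neg_zero]

theorem IsModifiedYangBaxter.rBracket_rBracket {R : L →ₗ[K] L} {κ : K}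
    (hR : IsModifiedYangBaxter R κ) (x y z : L) :
    rBracket R (rBracket R x y) z =
      ⁅⁅R x, R y⁆, z⁆ + ⁅⁅R x, y⁆, R z⁆ + ⁅⁅x, R y⁆, R z⁆ - κ • ⁅⁅x, y⁆, z⁆ := by
  have hRxy : R (rBracket R x y) = ⁅R x, R y⁆ - κ • ⁅x, y⁆ := by
    rw [← hR x y, sub_sub_cancel]
  rw [rBracket_apply, hRxy, rBracket_apply, sub_lie, smul_lie, add_lie]
  abel

theorem IsModifiedYangBaxter.rBracket_jacobi {R : L →ₗ[K] L} {κ : K}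
    (hR : IsModifiedYangBaxter R κ) (x y z : L) :
    rBracket R (rBracket R x y) z + rBracket R (rBracket R y z) x +
      rBracket R (rBracket R z x) y = 0 := by
  simp only [hR.rBracket_rBracket]
  linear_combination (norm := module) lie_lie_cyclic_sum_eq_zero (R x) (R y) z +
    lie_lie_cyclic_sum_eq_zero (R x) y (R z) + lie_lie_cyclic_sum_eq_zero x (R y) (R z) -
    κ • lie_lie_cyclic_sum_eq_zero x y z

theorem rBracket_smul_sub {p q : L →ₗ[K] L} (hpq : p + q = LinearMap.id) (c : K) (x y : L) :
    rBracket (c • (p - q)) x y = (2 * c) • (⁅p x, p y⁆ - ⁅q x, q y⁆) := by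
  have hsplit (z : L) : z = p z + q z := (LinearMap.congr_fun hpq z).symm
  calc
    rBracket (c • (p - q)) x y = c • (⁅p x - q x, y⁆ + ⁅x, p y - q y⁆) := by
      simp only [rBracket_apply, LinearMap.smul_apply, LinearMap.sub_apply, smul_lie, lie_smul,
        smul_add]
    _ = c • (⁅p x - q x, p y + q y⁆ + ⁅p x + q x, p y - q y⁆) := by
      rw [← hsplit x, ← hsplit y]
    _ = (2 * c) • (⁅p x, p y⁆ - ⁅q x, q y⁆) := by
      simp only [sub_lie, lie_add, add_lie, lie_sub]
      module

theorem isModifiedYangBaxter_smul_sub {p q : L →ₗ[K] L} (hpq : p + q = LinearMap.id)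
    (hp : ∀ x y, q ⁅p x, p y⁆ = 0) (hq : ∀ x y, p ⁅q x, q y⁆ = 0) (c : K) :
    IsModifiedYangBaxter (c • (p - q)) (-c ^ 2) := by
  intro x y
  have hsplit (z : L) : p z + q z = z := LinearMap.congr_fun hpq z
  have hpp : p ⁅p x, p y⁆ = ⁅p x, p y⁆ := by simpa [hp] using hsplit ⁅p x, p y⁆
  have hqq : q ⁅q x, q y⁆ = ⁅q x, q y⁆ := by simpa [hq] using hsplit ⁅q x, q y⁆
  have hxy : ⁅x, y⁆ = ⁅p x + q x, p y + q y⁆ := by rw [hsplit, hsplit]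
  rw [rBracket_smul_sub hpq, hxy]
  simp only [LinearMap.smul_apply, LinearMap.sub_apply, map_smul, map_sub, hp, hq, hpp, hqq,
    smul_lie, lie_smul, sub_lie, lie_sub, add_lie, lie_add]
  module

end RBracket

section Markov

open Matrix

attribute [local instance] LieRing.ofAssociativeRing

variable {K n : Type*} [CommRing K] [Fintype n] [DecidableEq n]

variable (K n) in
/-- The Markov projection `P_E : A ↦ diag (e A)`, where `e = (1, …, 1)`, onto the diagonal
matrices. -/
def markovE : Matrix n n K →ₗ[K] Matrix n n K :=
  diagonalLinearMap n K K ∘ₗ vecMulBilin K K 1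

variable (K n) in
/-- The Markov projection `P_M : A ↦ A - diag (e A)` onto the matrices with vanishing column
sums. -/
def markovM : Matrix n n K →ₗ[K] Matrix n n K :=
  LinearMap.id - markovE K n

theorem markovE_apply (A : Matrix n n K) : markovE K n A = diagonal (1 ᵥ* A) :=
  rfl

theorem markovM_apply (A : Matrix n n K) : markovM K n A = A - markovE K n A :=
  rfl

theorem markovE_apply_eq_diagonal_sum (A : Matrix n n K) :
    markovE K n A = diagonal fun j => ∑ i, A i j := by
  rw [markovE_apply, one_vecMul]
  exact congrArg diagonal (funext fun j => Finset.sum_apply j _ _)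

theorem markovM_add_markovE : markovM K n + markovE K n = LinearMap.id :=
  sub_add_cancel _ _

theorem one_vecMul_markovM (A : Matrix n n K) : 1 ᵥ* markovM K n A = 0 := by
  ext j
  rw [markovM_apply, markovE_apply, vecMul_sub, Pi.sub_apply, vecMul_diagonal, Pi.one_apply,
    one_mul, sub_self, Pi.zero_apply]

theorem markovE_lie_markovM_markovM (A B : Matrix n n K) :
    markovE K n ⁅markovM K n A, markovM K n B⁆ = 0 := by
  rw [markovE_apply, Ring.lie_def, vecMul_sub, ← vecMul_vecMul, ← vecMul_vecMul,
    one_vecMul_markovM, one_vecMul_markovM, zero_vecMul, zero_vecMul, sub_zero]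
  exact diagonal_zero

theorem lie_markovE_markovE (A B : Matrix n n K) : ⁅markovE K n A, markovE K n B⁆ = 0 :=
  (commute_diagonal _ _).lie_eq

theorem isModifiedYangBaxter_markov (c : K) :
    IsModifiedYangBaxter (c • (markovM K n - markovE K n)) (-c ^ 2) :=
  isModifiedYangBaxter_smul_sub markovM_add_markovE markovE_lie_markovM_markovM
    (fun A B => by rw [lie_markovE_markovE, map_zero]) c

theorem markov_R_bracket_is_lie_general (c : K) (PE PM R : Matrix n n K → Matrix n n K)
    (hPE : ∀ A, PE A = diagonal (fun j => ∑ i, A i j))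
    (hPM : ∀ A, PM A = A - PE A)
    (hR : ∀ A, R A = c • (PM A - PE A))
    (br : Matrix n n K → Matrix n n K → Matrix n n K)
    (hbr : ∀ A B, br A B = ⁅R A, B⁆ + ⁅A, R B⁆) :
    (∀ (a : K) (A A' B), br (a • A + A') B = a • br A B + br A' B) ∧
    (∀ (a : K) (A B B'), br A (a • B + B') = a • br A B + br A B') ∧
    (∀ A B, br A B = -br B A) ∧
    (∀ A B C, br (br A B) C + br (br B C) A + br (br C A) B = 0) := by
  let S : Matrix n n K →ₗ[K] Matrix n n K := c • (markovM K n - markovE K n)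
  have hRS (A : Matrix n n K) : R A = S A := by
    simp only [hR, hPM, hPE, ← markovE_apply_eq_diagonal_sum]
    rfl
  have hbrS (A B : Matrix n n K) : br A B = rBracket S A B := by
    rw [hbr, hRS, hRS, rBracket_apply]
  simp only [hbrS]
  exact ⟨fun a A A' B => by rw [map_add, map_smul, LinearMap.add_apply, LinearMap.smul_apply],
    fun a A B B' => by rw [map_add, map_smul],
    fun A B => (rBracket_skew S A B).symm,
    (isModifiedYangBaxter_markov c).rBracket_jacobi⟩

end Markov

/-- The R-deformed bracket `[A,B]_R := ⁅R(A), B⁆ + ⁅A, R(B)⁆` for the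
Markov R-matrix is a Lie bracket on `N × N` real matrices: bilinear, antisymmetric,
and satisfying the Jacobi identity. -/
theorem markov_R_bracket_is_lie (N : ℕ) (hN : 1 ≤ N)
    (PE PM R : Matrix (Fin N) (Fin N) ℝ → Matrix (Fin N) (Fin N) ℝ)
    (hPE : ∀ A, PE A = Matrix.diagonal (fun j => ∑ i, A i j))
    (hPM : ∀ A, PM A = A - PE A)
    (hR : ∀ A, R A = (1 / 2 : ℝ) • (PM A - PE A))
    (br : Matrix (Fin N) (Fin N) ℝ → Matrix (Fin N) (Fin N) ℝ → Matrix (Fin N) (Fin N) ℝ)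
    (hbr : ∀ A B, br A B = ⁅R A, B⁆ + ⁅A, R B⁆) :
    (∀ (c : ℝ) (A A' B), br (c • A + A') B = c • br A B + br A' B) ∧
    (∀ (c : ℝ) (A B B'), br A (c • B + B') = c • br A B + br A B') ∧
    (∀ A B, br A B = - br B A) ∧
    (∀ A B C, br (br A B) C + br (br B C) A + br (br C A) B = 0) := by
  exact markov_R_bracket_is_lie_general (1 / 2) PE PM R hPE hPM hR br hbr
end
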